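/- arXiv:2009.00042 — 6 statements merged into one kernel-verified Lean document; each statement's English description precedes it below -/
import Mathlib

section
/- Let V be a finite-dimensional real vector space, let α₁,…,α_m ∈ V, let Q₊ = {n₁α₁ + ⋯ + n_mα_m : n_i ∈ ℕ} and Q₋ = −Q₊, and let C = {x ∈ V* : x(α_i) > 0 for all i}. Let g₁,…,g_ℓ be invertible linear automorphisms of V (in the paper, g_k = s_{i₁}⋯s_{i_k} are the partial products of a reduced word in the Weyl group of a root system with simple roots α_i), acting on V* by x ↦ x ∘ g⁻¹. Let ν₁,…,ν_ℓ ∈ V with ν_k ∈ g_k(Q₋) for each k, and assume ν₁ + ⋯ + ν_k ∈ Q₊ for all k ∈ {1,…,ℓ−1} and ν₁ + ⋯ + ν_ℓ = 0. If there exist x₁,…,x_ℓ ∈ V* with x_k ∈ g_k(C) for each k and x_k − x_{k+1} ∈ C for each k ∈ {1,…,ℓ−1} (condition (A)), then ν₁ = ⋯ = ν_ℓ = 0. -/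
/-!
Summation by parts gives
`∑ x_k(ν_k) = x_ℓ(ν₁ + ⋯ + ν_ℓ) + ∑_{k < ℓ} (x_k - x_{k+1})(ν₁ + ⋯ + ν_k)`.
The first term on the right vanishes and the others are nonnegative, because a dominant functional
is nonnegative on `Q₊`. On the left, `x_k ∈ g_k(C)` is strictly negative on the nonzero elements of
`g_k(Q₋)`. Hence every `x_k(ν_k)` is zero, and so is every `ν_k`.
-/

section SummationByParts

variable {M N : Type*} [AddCommMonoid M] [AddCommGroup N]

theorem sum_apply_by_parts {n : ℕ} (f : Fin (n + 1) → M →+ N) (v : Fin (n + 1) → M) :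
    ∑ k, f k (v k) = f (Fin.last n) (∑ k, v k) +
      ∑ k : Fin n, (f k.castSucc - f k.succ) (∑ j ∈ Finset.Iic k.castSucc, v j) := by
  induction n with
  | zero => simp
  | succ n ih =>
    have Iic_last : Finset.Iic (Fin.last n) = Finset.univ := Finset.Iic_top
    calc ∑ k, f k (v k)
      _ = f (Fin.last n).castSucc (∑ k : Fin (n + 1), v k.castSucc) +
            ∑ k : Fin n, (f k.castSucc.castSucc - f k.succ.castSucc)
              (∑ j ∈ Finset.Iic k.castSucc, v j.castSucc) +
            f (Fin.last (n + 1)) (v (Fin.last (n + 1))) := by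
        rw [Fin.sum_univ_castSucc, ih (fun k => f k.castSucc) (fun k => v k.castSucc)]
      _ = f (Fin.last (n + 1)) (∑ k, v k) + ∑ k : Fin (n + 1), (f k.castSucc - f k.succ)
            (∑ j ∈ Finset.Iic k.castSucc, v j) := by
        rw [Fin.sum_univ_castSucc v, Fin.sum_univ_castSucc fun k : Fin (n + 1) =>
          (f k.castSucc - f k.succ) (∑ j ∈ Finset.Iic k.castSucc, v j)]
        simp only [Fin.sum_Iic_castSucc, Fin.succ_castSucc, Fin.succ_last, Iic_last,
          AddMonoidHom.sub_apply, map_add]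
        abel

end SummationByParts

section ConeHull

variable {R M : Type*} [Semiring R] [PartialOrder R] [AddCommMonoid M] [Module R M]

theorem apply_nonneg_of_mem_hull [IsOrderedRing R] {s : Set M} {f : M →ₗ[R] R}
    (hf : ∀ a ∈ s, 0 ≤ f a) {v : M} (hv : v ∈ PointedCone.hull R s) : 0 ≤ f v := by
  have hull_le : PointedCone.hull R s ≤ (PointedCone.positive R R).comap f := Submodule.span_le.2 hf
  exact hull_le hv

theorem eq_zero_or_apply_pos_of_mem_hull [IsStrictOrderedRing R] {s : Set M} {f : M →ₗ[R] R}
    (hf : ∀ a ∈ s, 0 < f a) {v : M} (hv : v ∈ PointedCone.hull R s) : v = 0 ∨ 0 < f v := by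
  induction hv using Submodule.span_induction with
  | mem a ha => exact .inr (hf a ha)
  | zero => exact .inl rfl
  | add u w _ _ hu hw =>
    rcases hu with rfl | hu
    · simpa only [zero_add] using hw
    rcases hw with rfl | hw
    · simpa only [add_zero] using Or.inr hu
    · exact .inr (by simpa only [map_add] using add_pos hu hw)
  | smul c u _ hu =>
    rcases hu with rfl | hu
    · exact .inl (smul_zero c)
    obtain ⟨c, hc⟩ := c
    rcases hc.eq_or_lt with rfl | hc
    · exact .inl (by simp only [Nonneg.mk_smul, zero_smul])
    · exact .inr (by simpa only [Nonneg.mk_smul, map_smul, smul_eq_mul] using mul_pos hc hu)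

end ConeHull

section NatCombination

variable {R M N ι : Type*} [Fintype ι] [Semiring R] [PartialOrder R] [IsOrderedRing R]

theorem mem_hull_range_of_eq_sum_natCast_smul [AddCommMonoid M] [Module R M]
    {a : ι → M} {v : M} (hv : ∃ c : ι → ℕ, v = ∑ i, (c i : R) • a i) :
    v ∈ PointedCone.hull R (Set.range a) := by
  obtain ⟨c, rfl⟩ := hv
  exact Submodule.sum_mem _ fun i _ =>
    PointedCone.smul_mem _ (c i).cast_nonneg (PointedCone.subset_hull (Set.mem_range_self i))

theorem neg_mem_hull_range_comp_of_symm_eq_neg_sum [AddCommGroup M] [Module R M]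
    [AddCommGroup N] [Module R N] (g : M ≃ₗ[R] N) {a : ι → M} {v : N}
    (hv : ∃ c : ι → ℕ, g.symm v = -∑ i, (c i : R) • a i) :
    -v ∈ PointedCone.hull R (Set.range (g ∘ a)) := by
  obtain ⟨c, hc⟩ := hv
  refine mem_hull_range_of_eq_sum_natCast_smul ⟨c, ?_⟩
  simp only [g.symm_apply_eq.1 hc, map_neg, neg_neg, map_sum, map_smul, Function.comp_apply]

end NatCombination

/-- In the setting of root systems, `s` is the set of simple roots and `t k` is its image under
`g_k`. -/
theorem condA_forces_zero_general
    {R M : Type*} [Ring R] [PartialOrder R] [IsStrictOrderedRing R] [AddCommGroup M] [Module R M]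
    {ℓ : ℕ} {s : Set M} {t : Fin ℓ → Set M} {ν : Fin ℓ → M}
    (hν : ∀ k, -ν k ∈ PointedCone.hull R (t k))
    (hpartial : ∀ k : Fin ℓ, (k : ℕ) + 1 < ℓ →
      ∑ j ∈ Finset.Iic k, ν j ∈ PointedCone.hull R s)
    (htotal : ∑ j, ν j = 0)
    {x : Fin ℓ → M →ₗ[R] R} (hx : ∀ k, ∀ a ∈ t k, 0 < x k a)
    (hdiff : ∀ (k : ℕ) (h : k + 1 < ℓ), ∀ a ∈ s,
      0 ≤ (x ⟨k, Nat.lt_of_succ_lt h⟩ - x ⟨k + 1, h⟩) a) (k : Fin ℓ) :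
    ν k = 0 := by
  obtain _ | n := ℓ
  · exact k.elim0
  have zero_or_neg : ∀ j, ν j = 0 ∨ x j (ν j) < 0 := fun j => by
    simpa only [neg_eq_zero, map_neg, neg_pos] using eq_zero_or_apply_pos_of_mem_hull (hx j) (hν j)
  have apply_nonpos : ∀ j ∈ Finset.univ, x j (ν j) ≤ 0 := fun j _ =>
    (zero_or_neg j).elim (fun h => by rw [h, map_zero]) le_of_lt
  have sum_nonneg : 0 ≤ ∑ j, x j (ν j) := by
    have by_parts := sum_apply_by_parts (fun j => (x j).toAddMonoidHom) ν
    rw [htotal, map_zero, zero_add] at by_parts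
    refine (Finset.sum_nonneg fun j _ => ?_).trans_eq by_parts.symm
    have hj : (j : ℕ) + 1 < n + 1 := Nat.succ_lt_succ j.isLt
    exact apply_nonneg_of_mem_hull (hdiff j hj) (hpartial j.castSucc hj)
  have apply_eq_zero : x k (ν k) = 0 :=
    (Finset.sum_eq_zero_iff_of_nonpos apply_nonpos).1
      (le_antisymm (Finset.sum_nonpos apply_nonpos) sum_nonneg) k (Finset.mem_univ k)
  exact (zero_or_neg k).resolve_right apply_eq_zero.not_lt

/-- Lemma on condition (A) (Baumann–Gaussent–Littelmann, Lemma `le:CondA`):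
let `Q₊` be the set of `ℕ`-linear combinations of `α₁, …, α_m ∈ V`, `Q₋ = −Q₊`, and
`C = {x ∈ V* | ∀ i, 0 < x (α i)}`.  Let `g₁, …, g_ℓ` be linear automorphisms of `V`,
acting on the dual by `x ↦ x ∘ g⁻¹` (so `y ∈ g(C) ↔ ∀ i, 0 < y (g (α i))` and
`v ∈ g(Q₋) ↔ g⁻¹ v ∈ Q₋`).  If `ν_k ∈ g_k(Q₋)` for each `k`, the proper partial sums
`ν₁ + ⋯ + ν_k` lie in `Q₊`, the total sum is `0`, and condition (A) holds
(there are `x_k ∈ g_k(C)` with `x_k − x_{k+1} ∈ C`), then all `ν_k` vanish. -/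
theorem condA_forces_zero
    {V : Type*} [AddCommGroup V] [Module ℝ V] [FiniteDimensional ℝ V]
    {m ℓ : ℕ} (α : Fin m → V)
    (g : Fin ℓ → (V ≃ₗ[ℝ] V))
    (ν : Fin ℓ → V)
    (hν : ∀ k, ∃ nn : Fin m → ℕ, (g k).symm (ν k) = - ∑ i, (nn i : ℝ) • α i)
    (hpartial : ∀ k : Fin ℓ, (k : ℕ) + 1 < ℓ →
      ∃ nn : Fin m → ℕ, (∑ j ∈ Finset.Iic k, ν j) = ∑ i, (nn i : ℝ) • α i)
    (htotal : (∑ j, ν j) = 0)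
    (hA : ∃ x : Fin ℓ → Module.Dual ℝ V,
      (∀ k, ∀ i, 0 < x k (g k (α i))) ∧
      (∀ (k : ℕ) (h : k + 1 < ℓ), ∀ i,
        0 < (x ⟨k, Nat.lt_of_succ_lt h⟩ - x ⟨k + 1, h⟩) (α i))) :
    ∀ k, ν k = 0 := by
  obtain ⟨x, hx, hdiff⟩ := hA
  exact condA_forces_zero_general
    (fun k => neg_mem_hull_range_comp_of_symm_eq_neg_sum (g k) (hν k))
    (fun k hk => mem_hull_range_of_eq_sum_natCast_smul (hpartial k hk)) htotal
    (fun k => Set.forall_mem_range.2 (hx k))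
    (fun k hk => Set.forall_mem_range.2 fun i => (hdiff k hk i).le)
end

section
/- Fix an integer N ≥ 1. For every upper unitriangular N×N matrix M with entries in the field ℂ((t)) of formal Laurent series, there exist an upper unitriangular matrix A all of whose entries are Laurent polynomials (elements of ℂ[t,t⁻¹] ⊆ ℂ((t))) and an upper unitriangular matrix B all of whose entries are formal power series (elements of ℂ[[t]] ⊆ ℂ((t))) such that M = A·B. (This is the equality N(𝒦) = N(ℂ[t,t⁻¹])·N(𝒪) for the group N of upper unitriangular matrices, with 𝒦 = ℂ((t)) and 𝒪 = ℂ[[t]].) -/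
/-- A square matrix is upper unitriangular if it has `1`s on the diagonal
and `0`s below the diagonal. -/
def IsUpperUnitriangular {N : ℕ} {R : Type*} [One R] [Zero R]
    (M : Matrix (Fin N) (Fin N) R) : Prop :=
  (∀ i, M i i = 1) ∧ ∀ i j : Fin N, j < i → M i j = 0

/-- A formal Laurent series is a Laurent polynomial (lies in `ℂ[t,t⁻¹] ⊆ ℂ((t))`)
iff it has finite support. -/
def IsLaurentPolynomialSeries (f : LaurentSeries ℂ) : Prop := f.support.Finite

/-- A formal Laurent series is a power series (lies in `ℂ[[t]] ⊆ ℂ((t))`)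
iff its coefficients in negative degrees vanish. -/
def IsPowerSeriesSeries (f : LaurentSeries ℂ) : Prop := ∀ n : ℤ, n < 0 → f.coeff n = 0

/-!
For `i < j`, the equation `(A * B) i j = M i j` between upper unitriangular matrices reads
`A i j + B i j = M i j - ∑ k ∈ Ioo i j, A i k * B k j`, and the right-hand side only involves
entries closer to the diagonal. So one may work outwards from the diagonal, each time splitting the
right-hand side into a summand allowed in `A` and one allowed in `B`. For a Laurent series such a
splitting is given by the principal part and the rest.
-/

open Finset

section Unitriangular

variable {ι R : Type*} [LinearOrder ι]

/-- The upper unitriangular matrix whose entries above the diagonal are those of `e`; the other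
values of `e` are ignored. -/
def unitriangularOf [Zero R] [One R] (e : ι → ι → R) : Matrix ι ι R :=
  .of fun i j ↦ if i < j then e i j else (1 : Matrix ι ι R) i j

section Entries

variable [Zero R] [One R] {e : ι → ι → R}

theorem unitriangularOf_apply_of_lt {i j : ι} (h : i < j) : unitriangularOf e i j = e i j :=
  if_pos h

theorem unitriangularOf_apply_self (i : ι) : unitriangularOf e i i = 1 := by
  simp [unitriangularOf]

theorem unitriangularOf_isUpperTriangular : (unitriangularOf e).IsUpperTriangular :=
  fun i j (h : j < i) ↦ by simp [unitriangularOf, h.not_gt, h.ne']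

theorem forall_unitriangularOf_apply {P : R → Prop} (h₀ : P 0) (h₁ : P 1) (he : ∀ i j, P (e i j))
    (i j : ι) : P (unitriangularOf e i j) := by
  rcases lt_trichotomy i j with h | rfl | h
  · exact unitriangularOf_apply_of_lt (e := e) h ▸ he i j
  · exact unitriangularOf_apply_self (e := e) i ▸ h₁
  · exact unitriangularOf_isUpperTriangular (e := e) h ▸ h₀

end Entries

section Product

variable [Fintype ι] [LocallyFiniteOrder ι] {A B : Matrix ι ι R}

theorem mul_apply_eq_sum_Icc [NonUnitalNonAssocSemiring R] (hA : A.IsUpperTriangular)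
    (hB : B.IsUpperTriangular) (i j : ι) : (A * B) i j = ∑ k ∈ Icc i j, A i k * B k j := by
  rw [Matrix.mul_apply]
  refine (sum_subset (subset_univ _) fun k _ hk ↦ ?_).symm
  rcases lt_or_ge k i with hki | hik
  · rw [hA hki, zero_mul]
  · have hjk : j < k := lt_of_not_ge fun hkj ↦ hk (mem_Icc.2 ⟨hik, hkj⟩)
    rw [hB hjk, mul_zero]

theorem mul_apply_self_of_isUpperTriangular [NonUnitalNonAssocSemiring R] (hA : A.IsUpperTriangular)
    (hB : B.IsUpperTriangular) (i : ι) : (A * B) i i = A i i * B i i := by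
  rw [mul_apply_eq_sum_Icc hA hB, Icc_self, sum_singleton]

theorem mul_apply_of_unitriangular [NonAssocSemiring R] (hA : A.IsUpperTriangular)
    (hA₁ : ∀ i, A i i = 1) (hB : B.IsUpperTriangular) (hB₁ : ∀ i, B i i = 1) {i j : ι} (h : i < j) :
    (A * B) i j = A i j + B i j + ∑ k ∈ Ioo i j, A i k * B k j := by
  rw [mul_apply_eq_sum_Icc hA hB, ← add_sum_Ioc_eq_sum_Icc h.le, ← add_sum_Ioo_eq_sum_Ioc h,
    hA₁, hB₁, one_mul, mul_one, ← add_assoc, add_comm (B i j)]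

end Product

end Unitriangular

section Splitting

variable {ι R : Type*} [NonAssocRing R]

/-- The value `A i j + B i j` must have for `A * B = M` to hold at `(i, j)`, where `A` and `B` are
the upper unitriangular matrices whose entries above the diagonal are obtained by applying `p` and
`q` to these values. It is meant for `p` and `q` with `p r + q r = r`. -/
def splitEntry [Preorder ι] [LocallyFiniteOrder ι] (p q : R → R) (M : Matrix ι ι R) (i j : ι) : R :=
  M i j - ∑ k ∈ (Ioo i j).attach, p (splitEntry p q M i k) * q (splitEntry p q M k j)
termination_by #(Ioo i j)
decreasing_by
  all_goals
    obtain ⟨hik, hkj⟩ := mem_Ioo.1 k.2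
    refine card_lt_card <| (ssubset_iff_of_subset ?_).2 ⟨k, k.2, by simp⟩
  · exact Ioo_subset_Ioo_right hkj.le
  · exact Ioo_subset_Ioo_left hik.le

theorem splitEntry_add_sum [Preorder ι] [LocallyFiniteOrder ι] (p q : R → R) (M : Matrix ι ι R)
    (i j : ι) :
    splitEntry p q M i j +
      ∑ k ∈ Ioo i j, p (splitEntry p q M i k) * q (splitEntry p q M k j) = M i j := by
  rw [splitEntry, sum_attach (Ioo i j) fun k ↦ p (splitEntry p q M i k) * q (splitEntry p q M k j),
    sub_add_cancel]

variable [LinearOrder ι] [Fintype ι]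

theorem unitriangularOf_mul_unitriangularOf_splitEntry [LocallyFiniteOrder ι] {p q : R → R}
    (hpq : ∀ r, p r + q r = r) {M : Matrix ι ι R} (hM₁ : ∀ i, M i i = 1)
    (hM : M.IsUpperTriangular) :
    unitriangularOf (fun i j ↦ p (splitEntry p q M i j)) *
      unitriangularOf (fun i j ↦ q (splitEntry p q M i j)) = M := by
  set A := unitriangularOf fun i j ↦ p (splitEntry p q M i j)
  set B := unitriangularOf fun i j ↦ q (splitEntry p q M i j)
  have hA : A.IsUpperTriangular := unitriangularOf_isUpperTriangular
  have hB : B.IsUpperTriangular := unitriangularOf_isUpperTriangular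
  have hA_lt : ∀ {i j}, i < j → A i j = p (splitEntry p q M i j) := unitriangularOf_apply_of_lt
  have hB_lt : ∀ {i j}, i < j → B i j = q (splitEntry p q M i j) := unitriangularOf_apply_of_lt
  have hA₁ : ∀ i, A i i = 1 := unitriangularOf_apply_self
  have hB₁ : ∀ i, B i i = 1 := unitriangularOf_apply_self
  ext i j
  rcases lt_trichotomy i j with hij | rfl | hji
  · have hsum : ∑ k ∈ Ioo i j, A i k * B k j =
        ∑ k ∈ Ioo i j, p (splitEntry p q M i k) * q (splitEntry p q M k j) :=
      sum_congr rfl fun k hk ↦ by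
        rw [hA_lt (mem_Ioo.1 hk).1, hB_lt (mem_Ioo.1 hk).2]
    rw [mul_apply_of_unitriangular hA hA₁ hB hB₁ hij, hsum, hA_lt hij, hB_lt hij, hpq,
      splitEntry_add_sum]
  · rw [mul_apply_self_of_isUpperTriangular hA hB, hA₁, hB₁, hM₁, one_mul]
  · rw [hA.mul hB hji, hM hji]

theorem exists_unitriangular_eq_mul {P Q : R → Prop} (hP₀ : P 0) (hP₁ : P 1) (hQ₀ : Q 0)
    (hQ₁ : Q 1) (hPQ : ∀ r, ∃ s, P s ∧ ∃ t, Q t ∧ s + t = r) {M : Matrix ι ι R}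
    (hM₁ : ∀ i, M i i = 1) (hM : M.IsUpperTriangular) :
    ∃ A B : Matrix ι ι R, ((∀ i, A i i = 1) ∧ A.IsUpperTriangular) ∧
      ((∀ i, B i i = 1) ∧ B.IsUpperTriangular) ∧
      (∀ i j, P (A i j)) ∧ (∀ i j, Q (B i j)) ∧ M = A * B := by
  let _ : LocallyFiniteOrder ι := Fintype.toLocallyFiniteOrder
  choose p hp q hq hpq using hPQ
  exact ⟨_, _, ⟨unitriangularOf_apply_self, unitriangularOf_isUpperTriangular⟩,
    ⟨unitriangularOf_apply_self, unitriangularOf_isUpperTriangular⟩,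
    forall_unitriangularOf_apply hP₀ hP₁ fun _ _ ↦ hp _,
    forall_unitriangularOf_apply hQ₀ hQ₁ fun _ _ ↦ hq _,
    (unitriangularOf_mul_unitriangularOf_splitEntry hpq hM₁ hM).symm⟩

end Splitting

section HahnSeries

variable {Γ R : Type*} [LinearOrder Γ]

theorem finite_support_truncLT [LocallyFiniteOrder Γ] [Zero R] (c : Γ) (x : HahnSeries Γ R) :
    (HahnSeries.truncLT c x).support.Finite := by
  rcases x.support.eq_empty_or_nonempty with hx | hx
  · simp [HahnSeries.support_eq_empty_iff.1 hx]
  · rw [HahnSeries.support_truncLT]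
    exact (Set.finite_Ico (x.isWF_support.min hx) c).subset fun n ⟨hn, hnc⟩ ↦
      ⟨x.isWF_support.min_le hx hn, hnc⟩

theorem coeff_sub_truncLT_of_lt [AddGroup R] {c n : Γ} (h : n < c) (x : HahnSeries Γ R) :
    (x - HahnSeries.truncLT c x).coeff n = 0 := by
  rw [HahnSeries.coeff_sub, HahnSeries.coeff_truncLT_of_lt h, sub_self]

end HahnSeries

theorem unitriangular_laurent_factorization_general {ι R : Type*} [LinearOrder ι] [Fintype ι]
    [NonAssocRing R] {M : Matrix ι ι (LaurentSeries R)} (hM₁ : ∀ i, M i i = 1)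
    (hM : M.IsUpperTriangular) :
    ∃ A B : Matrix ι ι (LaurentSeries R), ((∀ i, A i i = 1) ∧ A.IsUpperTriangular) ∧
      ((∀ i, B i i = 1) ∧ B.IsUpperTriangular) ∧
      (∀ i j, (A i j).support.Finite) ∧ (∀ i j, ∀ n < 0, (B i j).coeff n = 0) ∧ M = A * B :=
  exists_unitriangular_eq_mul
    (P := fun f ↦ f.support.Finite) (Q := fun f ↦ ∀ n < 0, f.coeff n = 0)
    (by simp) ((Set.finite_singleton 0).subset HahnSeries.support_single_subset)
    (by simp) (fun _ hn ↦ HahnSeries.coeff_single_of_ne hn.ne)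
    (fun f ↦ ⟨HahnSeries.truncLT 0 f, finite_support_truncLT 0 f, f - HahnSeries.truncLT 0 f,
      fun _ hn ↦ coeff_sub_truncLT_of_lt hn f, add_sub_cancel _ f⟩)
    hM₁ hM

/-- `N(𝒦) = N(ℂ[t,t⁻¹])·N(𝒪)`: every upper unitriangular matrix over `ℂ((t))` factors
as an upper unitriangular matrix with Laurent-polynomial entries times an upper
unitriangular matrix with power-series entries. -/
theorem unitriangular_laurent_factorization (N : ℕ) (hN : 1 ≤ N)
    (M : Matrix (Fin N) (Fin N) (LaurentSeries ℂ)) (hM : IsUpperUnitriangular M) :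
    ∃ A B : Matrix (Fin N) (Fin N) (LaurentSeries ℂ),
      IsUpperUnitriangular A ∧ IsUpperUnitriangular B ∧
      (∀ i j, IsLaurentPolynomialSeries (A i j)) ∧
      (∀ i j, IsPowerSeriesSeries (B i j)) ∧
      M = A * B :=
  unitriangular_laurent_factorization_general hM.1 hM.2
end

section
/- Fix an integer N ≥ 1. For every invertible N×N matrix A with entries in the field ℂ((t)) of formal Laurent series, there exist invertible N×N matrices B and C over ℂ((t)) with A = B·C such that all entries of B and of B⁻¹ are Laurent polynomials (elements of ℂ[t,t⁻¹] ⊆ ℂ((t))) and all entries of C and of C⁻¹ are formal power series (elements of ℂ[[t]] ⊆ ℂ((t))). (This is the equality GL_N(𝒦) = GL_N(ℂ[t,t⁻¹])·GL_N(𝒪), with 𝒦 = ℂ((t)) and 𝒪 = ℂ[[t]], which the paper deduces from the Iwasawa decomposition and the unitriangular factorization.) -/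
/-! Write `L = K[t, t⁻¹]` and `O = K[[t]]`; the former is dense in `K((t))`, the latter is open.
By Gaussian elimination `A = T * D` with `T` a product of elementary matrices and `D` diagonal.
Left multiplication by an elementary matrix `1 + c E_ij` preserves every double coset
`GL_n(L) x GL_n(O)`: choose `p ∈ L` so close to `c` that conjugating `1 + (c - p) E_ij` by `x⁻¹`
lands in the open subgroup `GL_n(O)`. Hence `A` lies in the double coset of `D`, which is the double
coset of `1` because every nonzero Laurent series is a power of `t` times a unit of `O`. -/

open Matrix Matrix.SpecialLinearGroup
open scoped LaurentSeries WithZero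

section DoubleCoset

variable {G : Type*} [Group G]

/-- The subgroup of those `g` whose left translation maps every double coset in `Γ \ G / U` to
itself. -/
def doubleCosetStabilizer (Γ U : Subgroup G) : Subgroup G where
  carrier := {g | ∀ x, DoubleCoset.setoid (Γ : Set G) U x (g * x)}
  one_mem' x := by
    rw [one_mul]
  mul_mem' {g h} hg hh x := by
    rw [mul_assoc]
    exact Setoid.trans' _ (hh x) (hg (h * x))
  inv_mem' {g} hg x := by
    simpa only [mul_inv_cancel_left] using Setoid.symm' _ (hg (g⁻¹ * x))

end DoubleCoset

variable {n R K : Type*} [Fintype n] [DecidableEq n] [CommRing R] [Field K]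

section Elementary

variable (n R) in
/-- The elementary group `E_n(R)`: the subgroup of `GL_n(R)` generated by the elementary matrices
`1 + c E_ij` with `i ≠ j`. -/
def elementarySubgroup : Subgroup (GL n R) :=
  Subgroup.closure (Set.range fun t : TransvectionStruct n R => toGL t.toSpecialLinearGroup)

/-- The embedding of the diagonal torus `(Rˣ)ⁿ` into `GL_n(R)`. -/
def diagonalGL : (n → Rˣ) →* GL n R :=
  (Units.map (diagonalRingHom n R : (n → R) →* Matrix n n R)).comp
    (MulEquiv.piUnits (M := fun _ : n => R)).symm.toMonoidHom

theorem coe_diagonalGL (d : n → Rˣ) :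
    (diagonalGL d : Matrix n n R) = diagonal fun i => (d i : R) := rfl

theorem diagonalGL_mul_transvection (d : n → Rˣ) {i j : n} (hij : i ≠ j) (c : R) :
    diagonalGL d * toGL (transvection hij c) =
      toGL (transvection hij (d i * c * ↑(d j)⁻¹)) * diagonalGL d := by
  refine Units.ext ?_
  simp only [Units.val_mul, coe_diagonalGL, coe_GL_coe_matrix, transvection_coe, mul_add, add_mul,
    mul_one, one_mul, add_right_inj]
  ext a b
  rw [diagonal_mul, mul_diagonal, single_apply, single_apply]
  split_ifs with h
  · rw [← h.1, ← h.2, Units.inv_mul_cancel_right]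
  · rw [mul_zero, zero_mul]

theorem diagonalGL_conj_mem_elementarySubgroup (d : n → Rˣ) {T : GL n R}
    (hT : T ∈ elementarySubgroup n R) :
    diagonalGL d * T * (diagonalGL d)⁻¹ ∈ elementarySubgroup n R := by
  suffices h : elementarySubgroup n R ≤
      (elementarySubgroup n R).comap (MulAut.conj (diagonalGL d)).toMonoidHom from h hT
  refine (Subgroup.closure_le _).2 ?_
  rintro _ ⟨t, rfl⟩
  refine Subgroup.subset_closure ⟨⟨t.i, t.j, t.hij, d t.i * t.c * ↑(d t.j)⁻¹⟩, ?_⟩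
  exact eq_mul_inv_of_mul_eq (diagonalGL_mul_transvection d t.hij t.c).symm

theorem exists_elementary_mul_diagonal (A : GL n K) :
    ∃ T ∈ elementarySubgroup n K, ∃ d : n → Kˣ, A = T * diagonalGL d := by
  suffices h : ∃ T ∈ elementarySubgroup n K, ∃ d : n → Kˣ,
      (A : Matrix n n K) = (T * diagonalGL d : GL n K) by simpa only [Units.val_inj] using h
  refine diagonal_transvection_induction_of_det_ne_zero
    (fun M => ∃ T ∈ elementarySubgroup n K, ∃ d : n → Kˣ, M = (T * diagonalGL d : GL n K))
    (A : Matrix n n K) A.det.ne_zero (fun D hD => ?_) (fun t => ?_) ?_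
  · rw [det_diagonal, Finset.prod_ne_zero_iff] at hD
    exact ⟨1, one_mem _, fun i => Units.mk0 (D i) (hD i (Finset.mem_univ i)), by
      rw [one_mul, coe_diagonalGL]; rfl⟩
  · exact ⟨toGL t.toSpecialLinearGroup, Subgroup.subset_closure ⟨t, rfl⟩, 1, by simp⟩
  · rintro _ _ - - ⟨T, hT, d, rfl⟩ ⟨T', hT', d', rfl⟩
    refine ⟨T * (diagonalGL d * T' * (diagonalGL d)⁻¹),
      mul_mem hT (diagonalGL_conj_mem_elementarySubgroup d hT'), d * d', ?_⟩
    rw [← Units.val_mul, map_mul]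
    congr 1
    group

end Elementary

section Approximation

variable (n) in
/-- `GL_n(S)` as a subgroup of `GL_n(R)`, for a subring `S` of `R`. -/
abbrev subringGL (S : Subring R) : Subgroup (GL n R) :=
  (S.matrix : Subring (Matrix n n R)).toSubmonoid.units

theorem toGL_transvection_mem_subringGL {S : Subring R} {i j : n} (hij : i ≠ j) {c : R}
    (hc : c ∈ S) : toGL (transvection hij c) ∈ subringGL n S := by
  have entries {c : R} (hc : c ∈ S) : (transvection hij c : Matrix n n R) ∈ S.matrix := by
    intro a b
    rw [transvection_coe]
    refine add_mem ((one_mem S.matrix : (1 : Matrix n n R) ∈ S.matrix) a b) ?_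
    rw [single_apply]
    split_ifs
    exacts [hc, zero_mem S]
  refine Submonoid.mem_units_of_val_mem_inv_val_mem _ (entries hc) ?_
  rw [← map_inv, transvection_inv]
  exact entries (neg_mem hc)

theorem diagonalGL_mem_subringGL {S : Subring R} {d : n → Rˣ}
    (hd : ∀ i, d i ∈ S.toSubmonoid.units) : diagonalGL d ∈ subringGL n S := by
  have entries {d : n → Rˣ} (hd : ∀ i, (d i : R) ∈ S) :
      (diagonalGL d : Matrix n n R) ∈ S.matrix :=
    (diagonal_mem_matrix_iff (zero_mem S)).2 hd
  refine Submonoid.mem_units_of_val_mem_inv_val_mem _ (entries fun i => (hd i).1) ?_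
  rw [← map_inv]
  exact entries fun i => (hd i).2

section Topology

variable [TopologicalSpace R] [IsTopologicalRing R]

theorem continuous_toGL_transvection {i j : n} (hij : i ≠ j) :
    Continuous fun c : R => toGL (transvection hij c) := by
  have hval : Continuous fun c : R => (transvection hij c : Matrix n n R) := by
    simp only [transvection_coe]
    refine continuous_const.add (continuous_matrix fun a b => ?_)
    simp only [single_apply]
    split_ifs
    exacts [continuous_id, continuous_const]
  refine Units.continuous_iff.2 ⟨hval, ?_⟩
  simp only [← map_inv, transvection_inv]
  exact hval.comp continuous_neg

variable {L O : Subring R}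

theorem toGL_transvection_mem_doubleCosetStabilizer (hL : Dense (L : Set R))
    (hO : IsOpen (O : Set R)) {i j : n} (hij : i ≠ j) (c : R) :
    toGL (transvection hij c) ∈ doubleCosetStabilizer (subringGL n L) (subringGL n O) := by
  intro x
  let conj (p : R) : GL n R := x⁻¹ * toGL (transvection hij (c - p)) * x
  have conj_continuous : Continuous conj :=
    (continuous_const.mul ((continuous_toGL_transvection hij).comp
      (continuous_const.sub continuous_id))).mul continuous_const
  have open_preimage : IsOpen (conj ⁻¹' subringGL n O) :=
    (Submonoid.isOpen_units hO.matrix).preimage conj_continuous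
  obtain ⟨p, hpL, hpO⟩ := hL.exists_mem_open open_preimage ⟨c, by simp [conj, one_mem]⟩
  refine DoubleCoset.rel_iff.2
    ⟨_, toGL_transvection_mem_subringGL hij hpL, conj p, hpO, ?_⟩
  calc toGL (transvection hij c) * x
      = toGL (transvection hij p) * toGL (transvection hij (c - p)) * x := by
        rw [← map_mul, ← transvection_add, add_sub_cancel]
    _ = toGL (transvection hij p) * x * conj p := by
        simp only [conj]
        group

theorem elementarySubgroup_le_doubleCosetStabilizer (hL : Dense (L : Set R))
    (hO : IsOpen (O : Set R)) :
    elementarySubgroup n R ≤ doubleCosetStabilizer (subringGL n L) (subringGL n O) := by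
  refine (Subgroup.closure_le _).2 ?_
  rintro _ ⟨t, rfl⟩
  exact toGL_transvection_mem_doubleCosetStabilizer hL hO t.hij t.c

end Topology

theorem exists_subringGL_mul_subringGL [TopologicalSpace K] [IsTopologicalRing K]
    {L O : Subring K} (hL : Dense (L : Set K)) (hO : IsOpen (O : Set K))
    (hLO : ∀ x : Kˣ, ∃ s ∈ L.toSubmonoid.units, ∃ u ∈ O.toSubmonoid.units, x = s * u)
    (A : GL n K) : ∃ B ∈ subringGL n L, ∃ C ∈ subringGL n O, A = B * C := by
  obtain ⟨T, hT, d, rfl⟩ := exists_elementary_mul_diagonal A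
  choose s hs u hu hsu using fun i => hLO (d i)
  have one_rel_diagonal :
      DoubleCoset.setoid (subringGL n L : Set (GL n K)) (subringGL n O) 1 (diagonalGL d) := by
    refine DoubleCoset.rel_iff.2
      ⟨_, diagonalGL_mem_subringGL hs, _, diagonalGL_mem_subringGL hu, ?_⟩
    rw [mul_one, ← map_mul]
    exact congrArg diagonalGL (funext hsu)
  have diagonal_rel :=
    elementarySubgroup_le_doubleCosetStabilizer hL hO hT (diagonalGL d)
  simpa only [mul_one] using DoubleCoset.rel_iff.1 (Setoid.trans' _ one_rel_diagonal diagonal_rel)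

end Approximation

section LaurentSeries

open MonoidWithZeroHom.ValueGroup₀ WithZero

variable (R) in
/-- The subring `R[t, t⁻¹]` of Laurent polynomials in `R((t))`, encoded as the Laurent series of
finite support. -/
def laurentPolynomialSubring : Subring R⸨X⸩ where
  carrier := {f | f.support.Finite}
  mul_mem' hf hg := (hf.add hg).subset HahnSeries.support_mul_subset
  one_mem' := (Set.finite_singleton (0 : ℤ)).subset HahnSeries.support_single_subset
  add_mem' hf hg := (hf.union hg).subset (HahnSeries.support_add_subset _ _)
  zero_mem' := by simp
  neg_mem' hf := by simpa using hf

theorem single_mem_laurentPolynomialSubring (k : ℤ) (a : R) :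
    HahnSeries.single k a ∈ laurentPolynomialSubring R :=
  (Set.finite_singleton k).subset HahnSeries.support_single_subset

theorem truncLT_mem_laurentPolynomialSubring (m : ℤ) (f : R⸨X⸩) :
    HahnSeries.truncLT m f ∈ laurentPolynomialSubring R := by
  refine (Set.finite_Ico f.order m).subset fun k hk => ?_
  rw [HahnSeries.support_truncLT] at hk
  exact ⟨HahnSeries.order_le_of_coeff_ne_zero hk.1, hk.2⟩

theorem exists_laurentPolynomial_valuation_sub_lt (f : K⸨X⸩) (γ : ℤᵐ⁰ˣ) :
    ∃ p ∈ laurentPolynomialSubring K, Valued.v (p - f) < (γ : ℤᵐ⁰) := by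
  obtain ⟨m, hm⟩ : ∃ m : ℤ, exp (-m) < (γ : ℤᵐ⁰) :=
    ⟨1 - log (γ : ℤᵐ⁰), by rw [← lt_log_iff_exp_lt γ.ne_zero]; lia⟩
  refine ⟨_, truncLT_mem_laurentPolynomialSubring m f, lt_of_le_of_lt ?_ hm⟩
  refine (LaurentSeries.valuation_le_iff_coeff_lt_eq_zero K).2 fun k hk => ?_
  rw [HahnSeries.coeff_sub, HahnSeries.coeff_truncLT_of_lt hk, sub_self]

theorem dense_laurentPolynomialSubring : Dense (laurentPolynomialSubring K : Set K⸨X⸩) := by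
  intro f
  refine mem_closure_iff_nhds.2 fun V hV => ?_
  obtain ⟨γ, hγ⟩ := Valued.mem_nhds.1 hV
  obtain ⟨p, hp, hpf⟩ := exists_laurentPolynomial_valuation_sub_lt f
    (γ.map (embedding (f := .ofClass (LaurentSeries.valued K).v)))
  exact ⟨p, hγ ((Valuation.restrict_lt_iff_lt_embedding _).2 hpf), hp⟩

theorem mem_powerSeries_as_subring_iff {f : K⸨X⸩} :
    f ∈ LaurentSeries.powerSeries_as_subring K ↔ Valued.v f ≤ 1 := by
  simp [LaurentSeries.val_le_one_iff_eq_coe]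

theorem isOpen_powerSeries_as_subring :
    IsOpen (LaurentSeries.powerSeries_as_subring K : Set K⸨X⸩) := by
  convert Valued.isOpen_integer K⸨X⸩ using 1
  ext f
  exact mem_powerSeries_as_subring_iff

theorem coeff_eq_zero_of_mem_powerSeries_as_subring {f : K⸨X⸩}
    (hf : f ∈ LaurentSeries.powerSeries_as_subring K) {k : ℤ} (hk : k < 0) : f.coeff k = 0 := by
  obtain ⟨g, -, rfl⟩ := hf
  exact (PowerSeries.coeff_coe g k).trans (if_pos hk)

theorem exists_laurentPolynomial_unit_mul_powerSeries_unit (f : K⸨X⸩ˣ) :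
    ∃ s ∈ (laurentPolynomialSubring K).toSubmonoid.units,
      ∃ u ∈ (LaurentSeries.powerSeries_as_subring K).toSubmonoid.units, f = s * u := by
  obtain ⟨k, hk⟩ : ∃ k : ℤ, Valued.v (f : K⸨X⸩) = exp (-k) :=
    ⟨-log (Valued.v (f : K⸨X⸩)), by
      rw [neg_neg, exp_log ((Valuation.ne_zero_iff _).2 f.ne_zero)]⟩
  let s : K⸨X⸩ˣ := ⟨HahnSeries.single k 1, HahnSeries.single (-k) 1, by simp, by simp⟩
  have v_s : Valued.v (s : K⸨X⸩) = Valued.v (f : K⸨X⸩) :=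
    (LaurentSeries.valuation_single_zpow K k).trans hk.symm
  have mem_powerSeries {u : K⸨X⸩ˣ} (hu : Valued.v (u : K⸨X⸩) = 1) :
      (u : K⸨X⸩) ∈ LaurentSeries.powerSeries_as_subring K :=
    mem_powerSeries_as_subring_iff.2 hu.le
  refine ⟨s, ⟨single_mem_laurentPolynomialSubring k 1, single_mem_laurentPolynomialSubring (-k) 1⟩,
    s⁻¹ * f, Submonoid.mem_units_of_val_mem_inv_val_mem _ (mem_powerSeries ?_) (mem_powerSeries ?_),
    (mul_inv_cancel_left s f).symm⟩
  · simp [v_s]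
  · simp [v_s]

end LaurentSeries

theorem gl_laurent_factorization_general (A : GL n K⸨X⸩) :
    ∃ B ∈ subringGL n (laurentPolynomialSubring K),
      ∃ C ∈ subringGL n (LaurentSeries.powerSeries_as_subring K), A = B * C :=
  exists_subringGL_mul_subringGL dense_laurentPolynomialSubring isOpen_powerSeries_as_subring
    exists_laurentPolynomial_unit_mul_powerSeries_unit A

/-- `GL_N(𝒦) = GL_N(ℂ[t,t⁻¹])·GL_N(𝒪)`: every invertible matrix `A` over `ℂ((t))`
factors as `A = B·C` where `B, B⁻¹` have Laurent-polynomial entries and `C, C⁻¹`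
have power-series entries. -/
theorem gl_laurent_factorization (N : ℕ) (hN : 1 ≤ N)
    (A : Matrix (Fin N) (Fin N) (LaurentSeries ℂ)) (hA : IsUnit A) :
    ∃ B C : (Matrix (Fin N) (Fin N) (LaurentSeries ℂ))ˣ,
      A = (B : Matrix (Fin N) (Fin N) (LaurentSeries ℂ)) *
          (C : Matrix (Fin N) (Fin N) (LaurentSeries ℂ)) ∧
      (∀ i j, IsLaurentPolynomialSeries
        ((B : Matrix (Fin N) (Fin N) (LaurentSeries ℂ)) i j)) ∧
      (∀ i j, IsLaurentPolynomialSeries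
        ((↑(B⁻¹) : Matrix (Fin N) (Fin N) (LaurentSeries ℂ)) i j)) ∧
      (∀ i j, IsPowerSeriesSeries
        ((C : Matrix (Fin N) (Fin N) (LaurentSeries ℂ)) i j)) ∧
      (∀ i j, IsPowerSeriesSeries
        ((↑(C⁻¹) : Matrix (Fin N) (Fin N) (LaurentSeries ℂ)) i j)) := by
  obtain ⟨B, hB, C, hC, hBC⟩ := gl_laurent_factorization_general hA.unit
  exact ⟨B, C, congrArg Units.val hBC, hB.1, hB.2,
    fun i j _ => coeff_eq_zero_of_mem_powerSeries_as_subring (hC.1 i j),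
    fun i j _ => coeff_eq_zero_of_mem_powerSeries_as_subring (hC.2 i j)⟩
end

section
/- Fix an integer N ≥ 1. (Existence) Every invertible N×N matrix A with entries in ℂ((t)) can be written as A = U·D·K, where U is an upper unitriangular matrix over ℂ((t)), D = diag(t^{μ₁},…,t^{μ_N}) for some tuple μ = (μ₁,…,μ_N) ∈ ℤ^N, and K is an invertible matrix such that all entries of K and of K⁻¹ lie in ℂ[[t]]. (Uniqueness) The tuple μ is uniquely determined by A: if U·diag(t^{μ₁},…,t^{μ_N})·K = U'·diag(t^{μ'₁},…,t^{μ'_N})·K' with U, U' upper unitriangular over ℂ((t)) and K, K', K⁻¹, (K')⁻¹ having entries in ℂ[[t]], then μ = μ'. (This is the Iwasawa decomposition G(𝒦) = ⊔_μ N(𝒦)·t^μ·G(𝒪) for G = GL_N.) -/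
/-!
Over a valuation ring, of any two entries in a row one divides the other, so column operations
over the ring clear a row to the left of the diagonal. Clearing the rows from the bottom up makes
`A` upper triangular, since a later operation fixes every row that vanishes on the columns
involved. The diagonal of the result is then a power of the uniformizer times a unit, entry by
entry. For uniqueness, `U'⁻¹ * U * t^μ = t^μ' * (K' * K⁻¹)`, and comparing diagonal entries shows
that `t^(μ i - μ' i)` is integral; exchanging the two decompositions gives equality.
-/

section BaseChange

open Matrix SpecialLinearGroup

variable {n R S : Type*} [Fintype n] [DecidableEq n] [CommRing R] [CommRing S]

lemma mem_range_generalLinearGroup_map_iff {f : R →+* S} (hf : Function.Injective f) {K : GL n S} :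
    K ∈ (GeneralLinearGroup.map (n := n) f).range ↔
      (∀ i j, (K : Matrix n n S) i j ∈ f.range) ∧
        ∀ i j, ((K⁻¹ : GL n S) : Matrix n n S) i j ∈ f.range := by
  constructor
  · rintro ⟨L, rfl⟩
    exact ⟨fun i j ↦ ⟨L i j, rfl⟩, fun i j ↦ ⟨(L⁻¹ : GL n R) i j, rfl⟩⟩
  · rintro ⟨hK, hKinv⟩
    choose L hL using hK
    choose L' hL' using hKinv
    have hmap : (of L).map f = K := ext hL
    have hmap' : (of L').map f = (K⁻¹ : GL n S) := ext hL'
    have hmul : of L * of L' = 1 := by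
      apply map_injective hf
      beta_reduce
      rw [Matrix.map_mul, hmap, hmap', Units.mul_inv, Matrix.map_one f f.map_zero f.map_one]
    exact ⟨⟨of L, of L', hmul, mul_eq_one_comm.mp hmul⟩, Units.ext hmap⟩

variable [Algebra R S]

lemma exists_diagonal_smul_eq_diagonal_mul_map (d : n → S) (u : n → Rˣ) :
    ∃ K ∈ (GeneralLinearGroup.map (n := n) (algebraMap R S)).range,
      diagonal (fun i ↦ u i • d i) = diagonal d * (K : Matrix n n S) := by
  let D : GL n R := Units.map (diagonalRingHom n R).toMonoidHom (MulEquiv.piUnits.symm u)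
  refine ⟨_, ⟨D, rfl⟩, ?_⟩
  ext i j
  rcases eq_or_ne i j with rfl | hij
  · simp [D, Units.smul_def, Algebra.smul_def, mul_comm]
  · simp [D, hij]

lemma vecMul_mapGL_transvection {i j : n} (hij : i ≠ j) (c : R) (w : n → S) :
    w ᵥ* (mapGL S (SpecialLinearGroup.transvection hij c) : Matrix n n S) =
      w + Pi.single j (w i * algebraMap R S c) := by
  have hmap : (mapGL S (SpecialLinearGroup.transvection hij c) : Matrix n n S) =
      1 + single i j (algebraMap R S c) := by
    ext a b
    simp [transvection_coe, one_apply, single_apply, apply_ite (algebraMap R S)]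
  rw [hmap, vecMul_add, vecMul_one]
  congr 1
  ext k
  simp [vecMul, dotProduct, single_apply, Pi.single_apply, ite_and, eq_comm]

end BaseChange

section RowReduction

open Matrix SpecialLinearGroup

variable {n F : Type*} [Fintype n] [DecidableEq n] [Field F]
  (R : Type*) [CommRing R] [IsDomain R] [ValuationRing R] [Algebra R F] [IsFractionRing R F]

/- For `b ∣ a` the choice `d = 1 - a / b` turns `a + d * b` into `b`, so that no exchange of the
two entries is needed. -/
lemma exists_eq_algebraMap_mul_add (a b : F) :
    ∃ c d : R, b = algebraMap R F c * (a + algebraMap R F d * b) := by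
  by_cases hb : b = 0
  · exact ⟨0, 0, by simp [hb]⟩
  by_cases ha : a = 0
  · exact ⟨1, 1, by simp [ha]⟩
  rcases ValuationRing.isInteger_or_isInteger R (a / b) with ⟨c, hc⟩ | ⟨c, hc⟩
  · refine ⟨1, 1 - c, ?_⟩
    rw [map_sub, map_one, hc]
    field_simp
    ring
  · refine ⟨c, 0, ?_⟩
    rw [hc, map_zero]
    field_simp
    ring

lemma exists_vecMul_mapGL_apply_eq_zero (v : n → F) {i j : n} (hij : i ≠ j) :
    ∃ P : SpecialLinearGroup n R, (v ᵥ* (mapGL F P : Matrix n n F)) j = 0 ∧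
      (∀ k, k ≠ i → k ≠ j → (v ᵥ* (mapGL F P : Matrix n n F)) k = v k) ∧
      ∀ w : n → F, w i = 0 → w j = 0 → w ᵥ* (mapGL F P : Matrix n n F) = w := by
  obtain ⟨c, d, hcd⟩ := exists_eq_algebraMap_mul_add R (v i) (v j)
  let P := SpecialLinearGroup.transvection hij.symm d * SpecialLinearGroup.transvection hij (-c)
  have hP (w : n → F) : w ᵥ* (mapGL F P : Matrix n n F) =
      w + Pi.single i (w j * algebraMap R F d) +
        Pi.single j ((w i + w j * algebraMap R F d) * algebraMap R F (-c)) := by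
    simp only [P, map_mul, GeneralLinearGroup.coe_mul, ← vecMul_vecMul, vecMul_mapGL_transvection,
      Pi.add_apply, Pi.single_eq_same]
  refine ⟨P, ?_, fun k hki hkj ↦ ?_, fun w hwi hwj ↦ ?_⟩
  · simp only [hP, Pi.add_apply, Pi.single_eq_same, Pi.single_eq_of_ne hij.symm, map_neg]
    linear_combination hcd
  · simp only [hP, Pi.add_apply, Pi.single_eq_of_ne hki, Pi.single_eq_of_ne hkj, add_zero]
  · simp only [hP, hwi, hwj, zero_mul, add_zero, Pi.single_zero]

lemma exists_vecMul_mapGL_eq_zero_on (v : n → F) {i : n} (s : Finset n) (hi : i ∉ s) :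
    ∃ P : SpecialLinearGroup n R, (∀ k ∈ s, (v ᵥ* (mapGL F P : Matrix n n F)) k = 0) ∧
      ∀ w : n → F, w i = 0 → (∀ k ∈ s, w k = 0) → w ᵥ* (mapGL F P : Matrix n n F) = w := by
  induction s using Finset.induction_on with
  | empty => exact ⟨1, by simp⟩
  | insert j s _ ih =>
    obtain ⟨hij, his⟩ : i ≠ j ∧ i ∉ s := by simpa using hi
    obtain ⟨P, hPv, hPw⟩ := ih his
    obtain ⟨Q, hQj, hQk, hQw⟩ :=
      exists_vecMul_mapGL_apply_eq_zero R (v ᵥ* (mapGL F P : Matrix n n F)) hij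
    refine ⟨P * Q, fun k hk ↦ ?_, fun w hwi hws ↦ ?_⟩
    · rw [map_mul, GeneralLinearGroup.coe_mul, ← vecMul_vecMul]
      by_cases hkj : k = j
      · rw [hkj, hQj]
      · have hks : k ∈ s := Finset.mem_of_mem_insert_of_ne hk hkj
        rw [hQk k (ne_of_mem_of_not_mem hks his) hkj, hPv k hks]
    · rw [map_mul, GeneralLinearGroup.coe_mul, ← vecMul_vecMul,
        hPw w hwi fun k hk ↦ hws k (Finset.mem_insert_of_mem hk),
        hQw w hwi (hws j (Finset.mem_insert_self j s))]

lemma exists_isUpperTriangular_mul_mapGL [LinearOrder n] (A : Matrix n n F) :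
    ∃ P : SpecialLinearGroup n R, (A * (mapGL F P : Matrix n n F)).IsUpperTriangular := by
  suffices h : ∀ s : Finset n, ∃ P : SpecialLinearGroup n R,
      ∀ r ∈ s, ∀ k < r, (A * (mapGL F P : Matrix n n F)) r k = 0 by
    obtain ⟨P, hP⟩ := h Finset.univ
    exact ⟨P, fun r k hk ↦ hP r (Finset.mem_univ r) k hk⟩
  intro s
  induction s using Finset.induction_on_min with
  | empty => exact ⟨1, by simp⟩
  | insert i s his ih =>
    obtain ⟨P, hP⟩ := ih
    set B := A * (mapGL F P : Matrix n n F)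
    obtain ⟨Q, hQi, hQw⟩ := exists_vecMul_mapGL_eq_zero_on R (B i) (i := i) {k | k < i} (by simp)
    refine ⟨P * Q, fun r hr k hk ↦ ?_⟩
    rw [map_mul, GeneralLinearGroup.coe_mul, ← Matrix.mul_assoc, mul_apply_eq_vecMul]
    rcases Finset.mem_insert.mp hr with rfl | hrs
    · exact hQi k (by simpa using hk)
    · have hri : i < r := his r hrs
      have hrow : ∀ l ∈ ({l | l < i} : Finset n), B r l = 0 := fun l hl ↦
        hP r hrs l ((Finset.mem_filter.mp hl).2.trans hri)
      rw [hQw (B r) (hP r hrs i hri) hrow, hP r hrs k hk]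

end RowReduction

section Triangular

open Matrix

variable {n S : Type*} [Fintype n] [LinearOrder n] [CommRing S]

lemma mul_apply_self_of_isUpperTriangular_s6 {V W : Matrix n n S} (hV : V.IsUpperTriangular)
    (hW : W.IsUpperTriangular) (i : n) : (V * W) i i = V i i * W i i := by
  rw [mul_apply]
  refine Finset.sum_eq_single i (fun k _ hk ↦ ?_) (by simp)
  rcases lt_or_gt_of_ne hk with hki | hik
  · rw [hV hki, zero_mul]
  · rw [hW hik, mul_zero]

lemma isUnit_apply_self_of_isUpperTriangular {B : Matrix n n S} (hB : B.IsUpperTriangular)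
    (hBu : IsUnit B) (i : n) : IsUnit (B i i) := by
  rw [isUnit_iff_isUnit_det, det_of_isUpperTriangular hB, IsUnit.prod_univ_iff] at hBu
  exact hBu i

end Triangular

namespace IsUpperUnitriangular

open Matrix

variable {N : ℕ} {S : Type*} [CommRing S] {U V : Matrix (Fin N) (Fin N) S}

lemma isUpperTriangular (hU : IsUpperUnitriangular U) : U.IsUpperTriangular :=
  fun i j hij ↦ hU.2 i j hij

lemma isUnit_det (hU : IsUpperUnitriangular U) : IsUnit U.det := by
  simp [det_of_isUpperTriangular hU.isUpperTriangular, hU.1]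

lemma mul (hU : IsUpperUnitriangular U) (hV : IsUpperUnitriangular V) :
    IsUpperUnitriangular (U * V) := by
  refine ⟨fun i ↦ ?_, fun i j hij ↦ hU.isUpperTriangular.mul hV.isUpperTriangular hij⟩
  rw [mul_apply_self_of_isUpperTriangular_s6 hU.isUpperTriangular hV.isUpperTriangular, hU.1, hV.1,
    one_mul]

lemma inv (hU : IsUpperUnitriangular U) : IsUpperUnitriangular U⁻¹ := by
  have : Invertible U := U.invertibleOfIsUnitDet hU.isUnit_det
  have hUinv : U⁻¹.IsUpperTriangular := blockTriangular_inv_of_blockTriangular hU.isUpperTriangular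
  refine ⟨fun i ↦ ?_, fun i j hij ↦ hUinv hij⟩
  have hii := mul_apply_self_of_isUpperTriangular_s6 hUinv hU.isUpperTriangular i
  rwa [nonsing_inv_mul U hU.isUnit_det, one_apply_eq, hU.1, mul_one, eq_comm] at hii

lemma apply_eq_of_mul_diagonal_mul_eq {U' : Matrix (Fin N) (Fin N) S} {d d' : Fin N → S}
    {K K' : GL (Fin N) S} (hU : IsUpperUnitriangular U) (hU' : IsUpperUnitriangular U')
    (h : U * diagonal d * (K : Matrix (Fin N) (Fin N) S) =
      U' * diagonal d' * (K' : Matrix (Fin N) (Fin N) S)) (i : Fin N) :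
    d i = d' i * (K' * K⁻¹) i i := by
  have hquot : U'⁻¹ * U * diagonal d = diagonal d' * (K' * K⁻¹ : GL (Fin N) S) :=
    calc U'⁻¹ * U * diagonal d
      _ = U'⁻¹ * (U * diagonal d * K) * (K⁻¹ : GL (Fin N) S) := by
          simp only [Matrix.mul_assoc, Units.mul_inv, Matrix.mul_one]
      _ = U'⁻¹ * U' * (diagonal d' * (K' * K⁻¹ : GL (Fin N) S)) := by
          rw [h]
          simp only [Matrix.mul_assoc, Units.val_mul]
      _ = diagonal d' * (K' * K⁻¹ : GL (Fin N) S) := by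
          rw [nonsing_inv_mul U' hU'.isUnit_det, Matrix.one_mul]
  have hii := congr_fun₂ hquot i i
  rwa [mul_diagonal, diagonal_mul, (hU'.inv.mul hU).1, one_mul] at hii

end IsUpperUnitriangular

section Iwasawa

open Matrix SpecialLinearGroup

variable {N : ℕ} {R F : Type*} [CommRing R] [Field F] [Algebra R F]

lemma exists_isUpperUnitriangular_mul_diagonal {B : Matrix (Fin N) (Fin N) F}
    (hB : B.IsUpperTriangular) (hBu : IsUnit B) :
    ∃ U, IsUpperUnitriangular U ∧ B = U * diagonal fun i ↦ B i i := by
  have hdiag (i : Fin N) : B i i ≠ 0 := (isUnit_apply_self_of_isUpperTriangular hB hBu i).ne_zero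
  refine ⟨B * diagonal fun i ↦ (B i i)⁻¹, ⟨fun i ↦ ?_, fun i j hij ↦ ?_⟩, ?_⟩
  · rw [mul_diagonal, mul_inv_cancel₀ (hdiag i)]
  · rw [mul_diagonal, hB hij, zero_mul]
  · simp [Matrix.mul_assoc, diagonal_mul_diagonal, hdiag]

lemma le_of_zpow_eq_zpow_mul_algebraMap [FaithfulSMul R F] {ϖ : R} (hϖ₀ : ϖ ≠ 0)
    (hϖ : ¬IsUnit ϖ) {m k : ℤ} {r : R}
    (h : algebraMap R F ϖ ^ m = algebraMap R F ϖ ^ k * algebraMap R F r) : k ≤ m := by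
  by_contra! hmk
  obtain ⟨l, rfl⟩ : ∃ l : ℕ, k = m + (l + 1 : ℕ) := ⟨(k - m - 1).toNat, by omega⟩
  have hinj := FaithfulSMul.algebraMap_injective R F
  have hϖF : algebraMap R F ϖ ≠ 0 := by simpa using hinj.ne hϖ₀
  rw [zpow_add₀ hϖF, zpow_natCast, mul_assoc, left_eq_mul₀ (zpow_ne_zero m hϖF)] at h
  have hone : ϖ ^ (l + 1) * r = 1 := hinj (by simpa using h)
  exact hϖ (isUnit_of_dvd_one ⟨ϖ ^ l * r, by rw [← hone]; ring⟩)

lemma iwasawa_exponent_le [FaithfulSMul R F] {ϖ : R} (hϖ₀ : ϖ ≠ 0) (hϖ : ¬IsUnit ϖ)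
    {U U' : Matrix (Fin N) (Fin N) F} {μ μ' : Fin N → ℤ} {K K' : GL (Fin N) F}
    (hU : IsUpperUnitriangular U) (hU' : IsUpperUnitriangular U')
    (hK : K ∈ (GeneralLinearGroup.map (algebraMap R F)).range)
    (hK' : K' ∈ (GeneralLinearGroup.map (algebraMap R F)).range)
    (h : U * diagonal (fun i ↦ algebraMap R F ϖ ^ μ i) * (K : Matrix (Fin N) (Fin N) F) =
      U' * diagonal (fun i ↦ algebraMap R F ϖ ^ μ' i) * (K' : Matrix (Fin N) (Fin N) F)) :
    μ' ≤ μ := by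
  intro i
  obtain ⟨L, hL⟩ := mul_mem hK' (inv_mem hK)
  have hi := hU.apply_eq_of_mul_diagonal_mul_eq hU' h i
  rw [← hL, GeneralLinearGroup.map_apply] at hi
  exact le_of_zpow_eq_zpow_mul_algebraMap hϖ₀ hϖ hi

variable [IsDomain R] [IsDiscreteValuationRing R] [IsFractionRing R F] {ϖ : R}

lemma exists_iwasawa_decomposition (hϖ : Irreducible ϖ) {A : Matrix (Fin N) (Fin N) F}
    (hA : IsUnit A) :
    ∃ (U : Matrix (Fin N) (Fin N) F) (μ : Fin N → ℤ) (K : GL (Fin N) F),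
      IsUpperUnitriangular U ∧ K ∈ (GeneralLinearGroup.map (algebraMap R F)).range ∧
      A = U * diagonal (fun i ↦ algebraMap R F ϖ ^ μ i) * (K : Matrix (Fin N) (Fin N) F) := by
  obtain ⟨P, hB⟩ := exists_isUpperTriangular_mul_mapGL R A
  set B := A * (mapGL F P : Matrix (Fin N) (Fin N) F) with hBdef
  have hBu : IsUnit B := hA.mul (mapGL F P).isUnit
  obtain ⟨U, hU, hBU⟩ := exists_isUpperUnitriangular_mul_diagonal hB hBu
  choose μ u hμ using fun i ↦ IsDiscreteValuationRing.exists_units_eq_smul_zpow_of_irreducible hϖ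
    (isUnit_apply_self_of_isUpperTriangular hB hBu i).ne_zero
  obtain ⟨D, hD, hdiag⟩ :=
    exists_diagonal_smul_eq_diagonal_mul_map (fun i ↦ algebraMap R F ϖ ^ μ i) u
  have hP : mapGL F P ∈ (GeneralLinearGroup.map (algebraMap R F)).range :=
    ⟨SpecialLinearGroup.toGL P, Units.ext rfl⟩
  refine ⟨U, μ, D * (mapGL F P)⁻¹, hU, mul_mem hD (inv_mem hP), ?_⟩
  calc A = B * ((mapGL F P)⁻¹ : GL (Fin N) F) := by
        rw [hBdef, Matrix.mul_assoc, Units.mul_inv, Matrix.mul_one]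
    _ = U * diagonal (fun i ↦ u i • algebraMap R F ϖ ^ μ i) * ((mapGL F P)⁻¹ : GL (Fin N) F) := by
        simp only [← hμ, ← hBU]
    _ = U * diagonal (fun i ↦ algebraMap R F ϖ ^ μ i) * (D * (mapGL F P)⁻¹ : GL (Fin N) F) := by
        rw [hdiag, Units.val_mul]
        simp only [Matrix.mul_assoc]

theorem iwasawa_decomposition_glN_general (hϖ : Irreducible ϖ) {A : Matrix (Fin N) (Fin N) F}
    (hA : IsUnit A) :
    (∃ (U : Matrix (Fin N) (Fin N) F) (μ : Fin N → ℤ) (K : GL (Fin N) F),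
      IsUpperUnitriangular U ∧ K ∈ (GeneralLinearGroup.map (algebraMap R F)).range ∧
      A = U * diagonal (fun i ↦ algebraMap R F ϖ ^ μ i) * (K : Matrix (Fin N) (Fin N) F)) ∧
    ∀ (U U' : Matrix (Fin N) (Fin N) F) (μ μ' : Fin N → ℤ) (K K' : GL (Fin N) F),
      IsUpperUnitriangular U → IsUpperUnitriangular U' →
      K ∈ (GeneralLinearGroup.map (algebraMap R F)).range →
      K' ∈ (GeneralLinearGroup.map (algebraMap R F)).range →
      U * diagonal (fun i ↦ algebraMap R F ϖ ^ μ i) * (K : Matrix (Fin N) (Fin N) F) =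
        U' * diagonal (fun i ↦ algebraMap R F ϖ ^ μ' i) * (K' : Matrix (Fin N) (Fin N) F) →
      μ = μ' :=
  ⟨exists_iwasawa_decomposition hϖ hA, fun _ _ _ _ _ _ hU hU' hK hK' h ↦
    le_antisymm (iwasawa_exponent_le hϖ.ne_zero hϖ.not_isUnit hU' hU hK' hK h.symm)
      (iwasawa_exponent_le hϖ.ne_zero hϖ.not_isUnit hU hU' hK hK' h)⟩

end Iwasawa

lemma isPowerSeriesSeries_iff_mem_range {f : LaurentSeries ℂ} :
    IsPowerSeriesSeries f ↔ f ∈ (algebraMap (PowerSeries ℂ) (LaurentSeries ℂ)).range := by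
  constructor
  · intro hf
    refine ⟨PowerSeries.mk fun k ↦ f.coeff k, ?_⟩
    ext m
    rw [LaurentSeries.coe_algebraMap, PowerSeries.coeff_coe]
    split_ifs with hm
    · exact (hf m hm).symm
    · rw [PowerSeries.coeff_mk, Int.natAbs_of_nonneg (not_lt.mp hm)]
  · rintro ⟨g, rfl⟩ m hm
    rw [LaurentSeries.coe_algebraMap, PowerSeries.coeff_coe, if_pos hm]

lemma single_one_eq_algebraMap_X_zpow {k : Type*} [Field k] (m : ℤ) :
    (HahnSeries.single m 1 : LaurentSeries k) =
      algebraMap (PowerSeries k) (LaurentSeries k) PowerSeries.X ^ m := by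
  rw [LaurentSeries.coe_algebraMap, PowerSeries.coe_X, RatFunc.single_zpow]

/-- Iwasawa decomposition `GL_N(𝒦) = ⊔_μ N(𝒦)·t^μ·GL_N(𝒪)`: every invertible matrix
over `ℂ((t))` can be written as `U·diag(t^{μ₁},…,t^{μ_N})·K` with `U` upper
unitriangular and `K, K⁻¹` with power-series entries, and the tuple `μ ∈ ℤ^N` is
uniquely determined. Here `t^{μ i}` is the Laurent series `HahnSeries.single (μ i) 1`. -/
theorem iwasawa_decomposition_glN (N : ℕ) (hN : 1 ≤ N)
    (A : Matrix (Fin N) (Fin N) (LaurentSeries ℂ)) (hA : IsUnit A) :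
    (∃ (U : Matrix (Fin N) (Fin N) (LaurentSeries ℂ)) (μ : Fin N → ℤ)
        (K : (Matrix (Fin N) (Fin N) (LaurentSeries ℂ))ˣ),
        IsUpperUnitriangular U ∧
        (∀ i j, IsPowerSeriesSeries
          ((K : Matrix (Fin N) (Fin N) (LaurentSeries ℂ)) i j)) ∧
        (∀ i j, IsPowerSeriesSeries
          ((↑(K⁻¹) : Matrix (Fin N) (Fin N) (LaurentSeries ℂ)) i j)) ∧
        A = U * Matrix.diagonal (fun i => (HahnSeries.single (μ i) 1 : LaurentSeries ℂ))
              * (K : Matrix (Fin N) (Fin N) (LaurentSeries ℂ))) ∧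
    (∀ (U U' : Matrix (Fin N) (Fin N) (LaurentSeries ℂ)) (μ μ' : Fin N → ℤ)
        (K K' : (Matrix (Fin N) (Fin N) (LaurentSeries ℂ))ˣ),
        IsUpperUnitriangular U → IsUpperUnitriangular U' →
        (∀ i j, IsPowerSeriesSeries
          ((K : Matrix (Fin N) (Fin N) (LaurentSeries ℂ)) i j)) →
        (∀ i j, IsPowerSeriesSeries
          ((↑(K⁻¹) : Matrix (Fin N) (Fin N) (LaurentSeries ℂ)) i j)) →
        (∀ i j, IsPowerSeriesSeries
          ((K' : Matrix (Fin N) (Fin N) (LaurentSeries ℂ)) i j)) →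
        (∀ i j, IsPowerSeriesSeries
          ((↑(K'⁻¹) : Matrix (Fin N) (Fin N) (LaurentSeries ℂ)) i j)) →
        U * Matrix.diagonal (fun i => (HahnSeries.single (μ i) 1 : LaurentSeries ℂ))
            * (K : Matrix (Fin N) (Fin N) (LaurentSeries ℂ)) =
          U' * Matrix.diagonal (fun i => (HahnSeries.single (μ' i) 1 : LaurentSeries ℂ))
            * (K' : Matrix (Fin N) (Fin N) (LaurentSeries ℂ)) →
        μ = μ') := by
  simpa only [mem_range_generalLinearGroup_map_iff (IsFractionRing.injective _ _),
    isPowerSeriesSeries_iff_mem_range, single_one_eq_algebraMap_X_zpow, and_assoc, and_imp]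
    using iwasawa_decomposition_glN_general (R := PowerSeries ℂ) PowerSeries.X_irreducible hA
end

section
/- Fix integers N ≥ 1 and n ≥ 1, let x₁,…,x_n ∈ ℂ, and set f = (z−x₁)⋯(z−x_n) ∈ ℂ[z]. Let L₀ = ℂ[z]^N ⊆ ℂ(z)^N be the standard lattice. For a ℂ[z]-submodule L of ℂ(z)^N, the following are equivalent: (i) there exists an N×N matrix β, invertible over ℂ(z), such that all entries of β and of β⁻¹ lie in the subring ℂ[z, f⁻¹] of ℂ(z), and L = β·L₀; (ii) there exists a positive integer k such that f^k·L₀ ⊆ L ⊆ f^{−k}·L₀. -/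
set_option synthInstance.maxHeartbeats 1000000
set_option maxHeartbeats 1000000

/-!
Multiplication by `f ^ k` embeds `L₀` and `L` into one another, so over a principal ideal domain
the two are isomorphic; a basis of `L` then gives the columns of `β`. Once `L = β L₀`, the
inclusion `f ^ k L ⊆ L₀` says that `f ^ k` clears the denominators of `β`, and `f ^ k L₀ ⊆ L` says
that it clears those of `β⁻¹`.
-/

/-- The standard lattice `R ^ ι` inside `A ^ ι`, for an `R`-algebra `A`, encoded as the range of the
entrywise structure map; `L₀ = ℂ[z]^N` is the case `R = ℂ[z]`, `A = ℂ(z)`. -/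
def standardLattice (R A ι : Type*) [CommSemiring R] [Semiring A] [Algebra R A] :
    Submodule R (ι → A) :=
  LinearMap.range ((Algebra.linearMap R A).compLeft ι)

section Semiring

variable {R A ι : Type*} [CommSemiring R] [Semiring A] [Algebra R A]

theorem mem_standardLattice {v : ι → A} :
    v ∈ standardLattice R A ι ↔ ∀ i, ∃ r : R, v i = algebraMap R A r := by
  refine ⟨?_, fun hv => ?_⟩
  · rintro ⟨c, rfl⟩ i
    exact ⟨c i, rfl⟩
  · choose c hc using hv
    exact ⟨c, (funext hc).symm⟩

theorem single_one_mem_standardLattice [DecidableEq ι] (j : ι) :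
    Pi.single j 1 ∈ standardLattice R A ι :=
  mem_standardLattice.2 fun i => ⟨Pi.single (M := fun _ => R) j 1 i, by
    simp only [Pi.single_apply, apply_ite (algebraMap R A), map_one, map_zero]⟩

end Semiring

section Matrix

variable {R A m n : Type*} [CommSemiring R] [CommSemiring A] [Algebra R A] [Fintype n]

theorem smul_mulVec_mem_standardLattice {a : R} {β : Matrix m n A}
    (hβ : ∀ i j, ∃ r : R, a • β i j = algebraMap R A r) {v : n → A}
    (hv : v ∈ standardLattice R A n) : a • β.mulVec v ∈ standardLattice R A m := by
  choose B hB using hβ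
  choose c hc using mem_standardLattice.1 hv
  refine mem_standardLattice.2 fun i => ⟨∑ j, B i j * c j, ?_⟩
  simp only [Pi.smul_apply, Matrix.mulVec, dotProduct, Finset.smul_sum, map_sum, map_mul, ← hB,
    ← hc, smul_mul_assoc]

theorem smul_apply_eq_algebraMap_of_smul_mulVec_mem {a : R} {β : Matrix m n A}
    (hβ : ∀ v ∈ standardLattice R A n, a • β.mulVec v ∈ standardLattice R A m) (i : m) (j : n) :
    ∃ r : R, a • β i j = algebraMap R A r := by
  classical
  simpa only [Pi.smul_apply, Matrix.mulVec_single_one, Matrix.col_apply] using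
    mem_standardLattice.1 (hβ _ (single_one_mem_standardLattice j)) i

theorem exists_matrix_image_standardLattice_eq_range (g : (n → R) →ₗ[R] (m → A)) :
    ∃ β : Matrix m n A, β.mulVec '' standardLattice R A n = Set.range g := by
  classical
  let β : Matrix m n A := Matrix.of fun i j => g (Pi.single j 1) i
  have hβ (c : n → R) : β.mulVec (fun j => algebraMap R A (c j)) = g c := by
    ext i
    calc β.mulVec (fun j => algebraMap R A (c j)) i
        = ∑ j, c j • g (Pi.single j 1) i := by
          simp only [β, Matrix.mulVec, dotProduct, Matrix.of_apply, Algebra.smul_def, mul_comm]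
      _ = g (∑ j, c j • Pi.single j 1) i := by
          simp only [map_sum, map_smul, Finset.sum_apply, Pi.smul_apply]
      _ = g c i := by rw [← pi_eq_sum_univ' c]
  refine ⟨β, ?_⟩
  rw [standardLattice, LinearMap.coe_range, ← Set.range_comp]
  exact congrArg Set.range (funext hβ)

theorem forall_smul_mem_iff_forall_smul_mulVec_mem [DecidableEq n] {β γ : Matrix n n A}
    (hβγ : β * γ = 1) (hγβ : γ * β = 1) {L P : Submodule R (n → A)}
    (hL : (L : Set (n → A)) = β.mulVec '' P) {a : R} :
    ((∀ v ∈ P, a • v ∈ L) ∧ ∀ w ∈ L, a • w ∈ P) ↔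
      (∀ v ∈ P, a • γ.mulVec v ∈ P) ∧ ∀ v ∈ P, a • β.mulVec v ∈ P := by
  have himage : Set.image β.mulVec = Set.preimage γ.mulVec :=
    Set.image_eq_preimage_of_inverse
      (fun v => by rw [Matrix.mulVec_mulVec, hγβ, Matrix.one_mulVec])
      (fun v => by rw [Matrix.mulVec_mulVec, hβγ, Matrix.one_mulVec])
  have hmem (v : n → A) : a • v ∈ L ↔ a • γ.mulVec v ∈ P := by
    rw [← SetLike.mem_coe, hL, himage, Set.mem_preimage, Matrix.mulVec_smul, SetLike.mem_coe]
  have hforall : (∀ w ∈ L, a • w ∈ P) ↔ ∀ v ∈ P, a • β.mulVec v ∈ P := by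
    simp only [← SetLike.mem_coe (p := L), hL, Set.forall_mem_image, SetLike.mem_coe]
  simp only [hmem, hforall]

end Matrix

section PrincipalIdealDomain

variable {R : Type*} [CommRing R] [IsDomain R] [IsPrincipalIdealRing R]

theorem nonempty_linearEquiv_of_injective_of_injective {M N : Type*} [AddCommGroup M]
    [AddCommGroup N] [Module R M] [Module R N] [Module.Free R M] [Module.Finite R M]
    {g : M →ₗ[R] N} {h : N →ₗ[R] M} (hg : Function.Injective g) (hh : Function.Injective h) :
    Nonempty (M ≃ₗ[R] N) := by
  have : Module.Free R N := .of_equiv (LinearEquiv.ofInjective h hh).symm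
  have : Module.Finite R N := .of_injective h hh
  exact FiniteDimensional.nonempty_linearEquiv_of_finrank_eq <| le_antisymm
    (LinearMap.finrank_le_finrank_of_injective hg) (LinearMap.finrank_le_finrank_of_injective hh)

theorem nonempty_linearEquiv_of_smul_mem {V : Type*} [AddCommGroup V] [Module R V]
    [Module.IsTorsionFree R V] {P Q : Submodule R V} [Module.Free R P] [Module.Finite R P]
    {a : R} (ha : a ≠ 0) (hPQ : ∀ v ∈ P, a • v ∈ Q) (hQP : ∀ w ∈ Q, a • w ∈ P) :
    Nonempty (P ≃ₗ[R] Q) := by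
  have hinj := smul_right_injective V ha
  exact nonempty_linearEquiv_of_injective_of_injective
    (g := (LinearMap.lsmul R V a).restrict hPQ) (h := (LinearMap.lsmul R V a).restrict hQP)
    (fun _ _ h => Subtype.ext (hinj (congrArg Subtype.val h)))
    (fun _ _ h => Subtype.ext (hinj (congrArg Subtype.val h)))

theorem exists_matrix_image_standardLattice_eq_of_smul_mem {A ι : Type*} [CommRing A] [Algebra R A]
    [Nontrivial A] [Module.IsTorsionFree R A] [Fintype ι]
    {L : Submodule R (ι → A)} {a : R} (ha : a ≠ 0)
    (hL₀L : ∀ v ∈ standardLattice R A ι, a • v ∈ L)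
    (hLL₀ : ∀ w ∈ L, a • w ∈ standardLattice R A ι) :
    ∃ β : Matrix ι ι A, β.mulVec '' standardLattice R A ι = L := by
  let e₀ : (ι → R) ≃ₗ[R] standardLattice R A ι :=
    LinearEquiv.ofInjective _ (FaithfulSMul.algebraMap_injective R A).comp_left
  have : Module.Free R (standardLattice R A ι) := .of_equiv e₀
  have : Module.Finite R (standardLattice R A ι) := .equiv e₀
  obtain ⟨e⟩ := nonempty_linearEquiv_of_smul_mem ha hL₀L hLL₀
  obtain ⟨β, hβ⟩ :=
    exists_matrix_image_standardLattice_eq_range (L.subtype ∘ₗ (e₀.trans e).toLinearMap)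
  refine ⟨β, hβ.trans ?_⟩
  rw [← LinearMap.coe_range, LinearEquiv.range_comp, Submodule.range_subtype]

end PrincipalIdealDomain

section Field

variable {R K : Type*} [CommSemiring R] [Field K] [Algebra R K]

theorem exists_mul_eq_one_of_smul_mem_range {m n : Type*} [Fintype n] [DecidableEq m]
    {a : R} (ha : algebraMap R K a ≠ 0) {β : Matrix m n K}
    (hβ : ∀ v ∈ standardLattice R K m, a • v ∈ Set.range β.mulVec) :
    ∃ γ : Matrix n m K, β * γ = 1 := by
  choose u hu using fun j => hβ _ (single_one_mem_standardLattice j)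
  refine ⟨(algebraMap R K a)⁻¹ • (Matrix.of u).transpose, ?_⟩
  ext i j
  have huij : (β * (Matrix.of u).transpose) i j = algebraMap R K a * (1 : Matrix m m K) i j := by
    rw [Matrix.one_apply, ← Pi.single_apply, ← Algebra.smul_def]
    exact congrFun (hu j) i
  rw [Matrix.mul_smul, Matrix.smul_apply, huij, smul_eq_mul, inv_mul_cancel_left₀ ha]

theorem eventually_pow_smul_mulVec_mem {m n : Type*} [Finite m] [Fintype n] {f : R}
    (hf : algebraMap R K f ≠ 0) {β : Matrix m n K}
    (hβ : ∀ i j, ∃ (p : R) (k : ℕ), β i j = algebraMap R K p / algebraMap R K f ^ k) :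
    ∀ᶠ k in Filter.atTop, ∀ v ∈ standardLattice R K n,
      f ^ k • β.mulVec v ∈ standardLattice R K m := by
  have hentry (i : m) (j : n) :
      ∀ᶠ k in Filter.atTop, ∃ r : R, f ^ k • β i j = algebraMap R K r := by
    obtain ⟨p, e, hp⟩ := hβ i j
    filter_upwards [Filter.eventually_ge_atTop e] with k hk
    refine ⟨f ^ (k - e) * p, ?_⟩
    rw [hp, Algebra.smul_def, map_mul, map_pow, map_pow, pow_sub₀ _ hf hk]
    ring
  have hentries : ∀ᶠ k in Filter.atTop, ∀ i j, ∃ r : R, f ^ k • β i j = algebraMap R K r :=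
    Filter.eventually_all.2 fun i => Filter.eventually_all.2 (hentry i)
  filter_upwards [hentries] with k hk v hv
  exact smul_mulVec_mem_standardLattice hk hv

theorem apply_eq_div_pow_of_pow_smul_mulVec_mem {m n : Type*} [Fintype n] {f : R}
    (hf : algebraMap R K f ≠ 0) {k : ℕ} {β : Matrix m n K}
    (hβ : ∀ v ∈ standardLattice R K n, f ^ k • β.mulVec v ∈ standardLattice R K m)
    (i : m) (j : n) :
    ∃ (p : R) (k : ℕ), β i j = algebraMap R K p / algebraMap R K f ^ k := by
  obtain ⟨p, hp⟩ := smul_apply_eq_algebraMap_of_smul_mulVec_mem hβ i j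
  refine ⟨p, k, eq_div_of_mul_eq (pow_ne_zero k hf) ?_⟩
  rw [← hp, Algebra.smul_def, map_pow, mul_comm]

end Field

theorem bd_lattice_characterization_general {R K ι : Type*} [CommRing R] [IsDomain R]
    [IsPrincipalIdealRing R] [Field K] [Algebra R K] [FaithfulSMul R K] [Fintype ι]
    [DecidableEq ι] {f : R} (hf : f ≠ 0) (L : Submodule R (ι → K)) :
    (∃ β γ : Matrix ι ι K, β * γ = 1 ∧ γ * β = 1 ∧
        (∀ i j, ∃ (p : R) (k : ℕ), β i j = algebraMap R K p / algebraMap R K f ^ k) ∧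
        (∀ i j, ∃ (p : R) (k : ℕ), γ i j = algebraMap R K p / algebraMap R K f ^ k) ∧
        (L : Set (ι → K)) = β.mulVec '' standardLattice R K ι) ↔
      ∃ k : ℕ, 0 < k ∧ (∀ v ∈ standardLattice R K ι, f ^ k • v ∈ L) ∧
        ∀ w ∈ L, f ^ k • w ∈ standardLattice R K ι := by
  have hfK : algebraMap R K f ≠ 0 := by
    simpa only [ne_eq, FaithfulSMul.algebraMap_eq_zero_iff] using hf
  constructor
  · rintro ⟨β, γ, hβγ, hγβ, hβ, hγ, hL⟩
    obtain ⟨k, hk, hkβ, hkγ⟩ := ((Filter.eventually_gt_atTop 0).and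
      ((eventually_pow_smul_mulVec_mem hfK hβ).and (eventually_pow_smul_mulVec_mem hfK hγ))).exists
    exact ⟨k, hk, (forall_smul_mem_iff_forall_smul_mulVec_mem hβγ hγβ hL).2 ⟨hkγ, hkβ⟩⟩
  · rintro ⟨k, -, hL₀L, hLL₀⟩
    obtain ⟨β, hL⟩ :=
      exists_matrix_image_standardLattice_eq_of_smul_mem (pow_ne_zero k hf) hL₀L hLL₀
    obtain ⟨γ, hβγ⟩ : ∃ γ, β * γ = 1 := exists_mul_eq_one_of_smul_mem_range
      (by simpa only [map_pow] using pow_ne_zero k hfK)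
      fun v hv => Set.image_subset_range _ _ (hL.superset (hL₀L v hv))
    have hγβ : γ * β = 1 := mul_eq_one_comm.1 hβγ
    obtain ⟨hγ, hβ⟩ :=
      (forall_smul_mem_iff_forall_smul_mulVec_mem hβγ hγβ hL.symm).1 ⟨hL₀L, hLL₀⟩
    exact ⟨β, γ, hβγ, hγβ, apply_eq_div_pow_of_pow_smul_mulVec_mem hfK hβ,
      apply_eq_div_pow_of_pow_smul_mulVec_mem hfK hγ, hL.symm⟩

/-- Characterization of the lattices appearing in the Beilinson–Drinfeld Grassmannian for
`GL_N` (Example `ex:BDGrIndVar` of Baumann–Gaussent–Littelmann): with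
`f = (z−x₁)⋯(z−x_n)` and `L₀ = ℂ[z]^N` the standard lattice inside `ℂ(z)^N`, a
`ℂ[z]`-submodule `L` of `ℂ(z)^N` is of the form `β·L₀` for a matrix `β` invertible over
`ℂ(z)` with entries of `β` and `β⁻¹` in `ℂ[z, f⁻¹]` if and only if
`f^k·L₀ ⊆ L ⊆ f^{−k}·L₀` for some positive integer `k`. -/
theorem bd_lattice_characterization (N n : ℕ) (hN : 1 ≤ N) (hn : 1 ≤ n)
    (x : Fin n → ℂ)
    (L₀ : Submodule (Polynomial ℂ) (Fin N → RatFunc ℂ))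
    (hL₀ : ∀ v, v ∈ L₀ ↔ ∀ i, ∃ p : Polynomial ℂ,
      v i = algebraMap (Polynomial ℂ) (RatFunc ℂ) p)
    (L : Submodule (Polynomial ℂ) (Fin N → RatFunc ℂ)) :
    (∃ β γ : Matrix (Fin N) (Fin N) (RatFunc ℂ),
        β * γ = 1 ∧ γ * β = 1 ∧
        (∀ i j, ∃ (p : Polynomial ℂ) (k : ℕ),
          β i j = algebraMap (Polynomial ℂ) (RatFunc ℂ) p /
            (algebraMap (Polynomial ℂ) (RatFunc ℂ)
              (∏ l, (Polynomial.X - Polynomial.C (x l)))) ^ k) ∧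
        (∀ i j, ∃ (p : Polynomial ℂ) (k : ℕ),
          γ i j = algebraMap (Polynomial ℂ) (RatFunc ℂ) p /
            (algebraMap (Polynomial ℂ) (RatFunc ℂ)
              (∏ l, (Polynomial.X - Polynomial.C (x l)))) ^ k) ∧
        (L : Set (Fin N → RatFunc ℂ)) =
          β.mulVec '' (L₀ : Set (Fin N → RatFunc ℂ))) ↔
    (∃ k : ℕ, 0 < k ∧
        (∀ v ∈ L₀, (algebraMap (Polynomial ℂ) (RatFunc ℂ)
            (∏ l, (Polynomial.X - Polynomial.C (x l)))) ^ k • v ∈ L) ∧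
        (∀ w ∈ L, (algebraMap (Polynomial ℂ) (RatFunc ℂ)
            (∏ l, (Polynomial.X - Polynomial.C (x l)))) ^ k • w ∈ L₀)) := by
  obtain rfl : L₀ = standardLattice _ _ _ :=
    SetLike.ext fun v => (hL₀ v).trans mem_standardLattice.symm
  simpa only [← map_pow, algebraMap_smul] using bd_lattice_characterization_general
    (Finset.prod_ne_zero_iff.2 fun l _ => Polynomial.X_sub_C_ne_zero (x l)) L
end

section
/- Let R = ℂ[x₁, x₂, a, b, c, d] be the polynomial ring in six variables over ℂ, let 𝔭 be the ideal generated by {a, b, x₂ − x₁}, and let 𝔮 be the ideal generated by {b, a·c + x₂ − x₁}. Then: (1) 𝔭 is a prime ideal of R and 𝔮 ⊆ 𝔭; (2) in the local ring A obtained by localizing R/𝔮 at the prime ideal 𝔭/𝔮, the image of c is invertible and the maximal ideal of A is generated by the image of x₂ − x₁. (Consequently the order of vanishing of x₂ − x₁ along V(𝔭) on V(𝔮) equals one; this is the computation showing that ⟨Z_{1,−1}⟩ appears with coefficient one in ⟨⟨Z_{2,−2}⟩⟩ in the paper's SL₃ example.) -/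
open MvPolynomial

/-- The polynomial ring `R = ℂ[x₁, x₂, a, b, c, d]`, with the variables
`x₁, x₂, a, b, c, d` being `X 0, X 1, X 2, X 3, X 4, X 5`. -/
noncomputable abbrev SL3Ring : Type := MvPolynomial (Fin 6) ℂ

/-- The ideal `𝔭 = (a, b, x₂ − x₁)`. -/
noncomputable def SL3p : Ideal SL3Ring := Ideal.span {X 2, X 3, X 1 - X 0}

/-- The ideal `𝔮 = (b, a·c + x₂ − x₁)`. -/
noncomputable def SL3q : Ideal SL3Ring := Ideal.span {X 3, X 2 * X 4 + X 1 - X 0}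

/-!
The variety `V(𝔭)` is parametrized by `(x, c, d) ↦ (x, x, 0, 0, c, d)`, and the projection to the
coordinates `x₁, c, d` inverts this parametrization modulo `𝔭`. So `𝔭` is the kernel of a
homomorphism into a polynomial ring over a domain, so it is prime, and it does not contain `c`.
On `V(𝔮)` we have `b = 0` and `a * c = -(x₂ - x₁)`. As `c` is a unit at `𝔭`, the generators `a` and
`b` of the maximal ideal are multiples of the remaining one, `x₂ - x₁`.
-/

theorem ker_le_of_adjoin_eq_top {k A B : Type*} [CommSemiring k] [CommRing A] [Semiring B]
    [Algebra k A] [Algebra k B] {s : Set A} (hs : Algebra.adjoin k s = ⊤) (f : A →ₐ[k] B)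
    (g : B →ₐ[k] A) {I : Ideal A} (hgf : ∀ x ∈ s, x - g (f x) ∈ I) : RingHom.ker f ≤ I := by
  have mk_comp : (Ideal.Quotient.mkₐ k I).comp (g.comp f) = Ideal.Quotient.mkₐ k I :=
    AlgHom.ext_of_adjoin_eq_top hs fun x hx => (Ideal.Quotient.eq.2 (hgf x hx)).symm
  intro y hy
  have mk_eq : Ideal.Quotient.mk I (g (f y)) = Ideal.Quotient.mk I y :=
    DFunLike.congr_fun mk_comp y
  rw [RingHom.mem_ker.1 hy, map_zero, map_zero] at mk_eq
  exact Ideal.Quotient.eq_zero_iff_mem.1 mk_eq.symm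

theorem span_pair_mul_add_le_span_triple {R : Type*} [CommSemiring R] (a b c t : R) :
    Ideal.span {b, a * c + t} ≤ Ideal.span {a, b, t} := by
  rw [Ideal.span_le]
  rintro _ (rfl | rfl)
  · exact Ideal.subset_span (by simp)
  · exact add_mem (Ideal.mul_mem_right _ _ (Ideal.subset_span (by simp)))
      (Ideal.subset_span (by simp))

section Localization

theorem maximalIdeal_eq_map_of_forall_exists_mul_mem {R A : Type*} [CommSemiring R]
    [CommSemiring A] [Algebra R A] [IsLocalRing A] {P : Ideal R} [P.IsPrime]
    [IsLocalization.AtPrime A P] {s : Set R} (hP : P = Ideal.span s) {I : Ideal R} (hI : I ≤ P)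
    (hs : ∀ x ∈ s, ∃ c ∉ P, c * x ∈ I) :
    IsLocalRing.maximalIdeal A = I.map (algebraMap R A) := by
  rw [← IsLocalization.AtPrime.map_eq_maximalIdeal P A]
  refine le_antisymm ?_ (Ideal.map_mono hI)
  rw [hP, Ideal.map_le_iff_le_comap, Ideal.span_le]
  exact fun x hx =>
    (IsLocalization.algebraMap_mem_map_algebraMap_iff P.primeCompl A I x).2 (hs x hx)

variable {R : Type*} [CommRing R] {p q : Ideal R}

theorem isUnit_algebraMap_mk_iff_notMem (hqp : q ≤ p) [(p.map (Ideal.Quotient.mk q)).IsPrime]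
    (A : Type*) [CommSemiring A] [Algebra (R ⧸ q) A]
    [IsLocalization.AtPrime A (p.map (Ideal.Quotient.mk q))] {x : R} :
    IsUnit (algebraMap (R ⧸ q) A (Ideal.Quotient.mk q x)) ↔ x ∉ p := by
  rw [IsLocalization.AtPrime.isUnit_to_map_iff A (p.map (Ideal.Quotient.mk q)),
    Ideal.mem_primeCompl_iff, Ideal.mem_quotient_iff_mem hqp]

theorem maximalIdeal_eq_span_of_mul_add_mem {a b c t : R} (hp : p = Ideal.span {a, b, t})
    (hqp : q ≤ p) (hb : b ∈ q) (hact : a * c + t ∈ q) (hc : c ∉ p)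
    [(p.map (Ideal.Quotient.mk q)).IsPrime] (A : Type*) [CommSemiring A] [Algebra (R ⧸ q) A]
    [IsLocalRing A] [IsLocalization.AtPrime A (p.map (Ideal.Quotient.mk q))] :
    IsLocalRing.maximalIdeal A =
      Ideal.span {algebraMap (R ⧸ q) A (Ideal.Quotient.mk q t)} := by
  have span_eq : p.map (Ideal.Quotient.mk q) = Ideal.span
      {Ideal.Quotient.mk q a, Ideal.Quotient.mk q b, Ideal.Quotient.mk q t} := by
    rw [hp, Ideal.map_span, Set.image_insert_eq, Set.image_pair]
  have mk_c_notMem : Ideal.Quotient.mk q c ∉ p.map (Ideal.Quotient.mk q) :=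
    mt (Ideal.mem_quotient_iff_mem hqp).1 hc
  have mk_b : Ideal.Quotient.mk q b = 0 := Ideal.Quotient.eq_zero_iff_mem.2 hb
  have mk_mul : Ideal.Quotient.mk q c * Ideal.Quotient.mk q a = -Ideal.Quotient.mk q t := by
    rw [← map_mul, ← map_neg, mul_comm, Ideal.Quotient.eq, sub_neg_eq_add]
    exact hact
  rw [← Set.image_singleton, ← Ideal.map_span]
  refine maximalIdeal_eq_map_of_forall_exists_mul_mem span_eq ?_ ?_
  · rw [span_eq]
    exact Ideal.span_mono (by simp)
  · rintro _ (rfl | rfl | rfl)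
    · exact ⟨_, mk_c_notMem, mk_mul ▸ neg_mem (Ideal.mem_span_singleton_self _)⟩
    · exact ⟨_, mk_c_notMem, by simp [mk_b]⟩
    · exact ⟨_, mk_c_notMem, Ideal.mul_mem_left _ _ (Ideal.mem_span_singleton_self _)⟩

end Localization

section Polynomial

variable (k : Type*) [CommRing k]

/-- The comorphism `k[x₁, x₂, a, b, c, d] → k[x, c, d]` of the parametrization
`(x, c, d) ↦ (x, x, 0, 0, c, d)` of `V(a, b, x₂ - x₁)`, with `x, c, d` being `X 0, X 1, X 2`. -/
noncomputable def sl3Parametrization : MvPolynomial (Fin 6) k →ₐ[k] MvPolynomial (Fin 3) k :=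
  aeval ![X 0, X 0, 0, 0, X 1, X 2]

theorem ker_sl3Parametrization :
    RingHom.ker (sl3Parametrization k) = Ideal.span {X 2, X 3, X 1 - X 0} := by
  apply le_antisymm
  · refine ker_le_of_adjoin_eq_top adjoin_range_X _ (aeval ![X 0, X 4, X 5]) ?_
    rintro _ ⟨i, rfl⟩
    have mem_span (f : MvPolynomial (Fin 6) k) (hf : f ∈ ({X 2, X 3, X 1 - X 0} : Set _)) :
        f ∈ Ideal.span {X 2, X 3, X 1 - X 0} := Ideal.subset_span hf
    fin_cases i <;> simp [sl3Parametrization, mem_span]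
  · rw [Ideal.span_le]
    rintro _ (rfl | rfl | rfl) <;> simp [sl3Parametrization, RingHom.mem_ker]

variable {k}

theorem X_four_notMem_ker_sl3Parametrization [Nontrivial k] :
    X 4 ∉ RingHom.ker (sl3Parametrization k) := by
  simp [sl3Parametrization, RingHom.mem_ker]

theorem sl3_order_of_vanishing_one_general [IsDomain k] {p q : Ideal (MvPolynomial (Fin 6) k)}
    (hp : p = Ideal.span {X 2, X 3, X 1 - X 0})
    (hq : q = Ideal.span {X 3, X 2 * X 4 + X 1 - X 0}) :
    p.IsPrime ∧ q ≤ p ∧ ∃ _ : (p.map (Ideal.Quotient.mk q)).IsPrime,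
      IsUnit (algebraMap (MvPolynomial (Fin 6) k ⧸ q)
          (Localization.AtPrime (p.map (Ideal.Quotient.mk q))) (Ideal.Quotient.mk q (X 4))) ∧
      IsLocalRing.maximalIdeal (Localization.AtPrime (p.map (Ideal.Quotient.mk q))) =
        Ideal.span {algebraMap (MvPolynomial (Fin 6) k ⧸ q)
          (Localization.AtPrime (p.map (Ideal.Quotient.mk q)))
          (Ideal.Quotient.mk q (X 1 - X 0))} := by
  have p_eq_ker : p = RingHom.ker (sl3Parametrization k) := hp.trans (ker_sl3Parametrization k).symm
  have p_prime : p.IsPrime := p_eq_ker ▸ RingHom.ker_isPrime (sl3Parametrization k)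
  have c_notMem : X 4 ∉ p := p_eq_ker ▸ X_four_notMem_ker_sl3Parametrization
  rw [add_sub_assoc] at hq
  have q_le_p : q ≤ p := by
    rw [hp, hq]
    exact span_pair_mul_add_le_span_triple _ _ _ _
  have map_prime := Ideal.isPrime_map_quotientMk_of_isPrime q_le_p
  refine ⟨p_prime, q_le_p, map_prime, (isUnit_algebraMap_mk_iff_notMem q_le_p _).2 c_notMem, ?_⟩
  refine maximalIdeal_eq_span_of_mul_add_mem hp q_le_p ?_ ?_ c_notMem _ <;>
    exact hq ▸ Ideal.subset_span (by simp)

end Polynomial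

/-- The local computation in the `SL₃` example of Baumann–Gaussent–Littelmann
(sect. `ss:Example`): `𝔭 = (a, b, x₂−x₁)` is prime, `𝔮 = (b, ac+x₂−x₁) ⊆ 𝔭`, and in
the localization `A` of `R/𝔮` at `𝔭/𝔮` the image of `c` is invertible and the maximal
ideal of `A` is generated by the image of `x₂ − x₁`. -/
theorem sl3_order_of_vanishing_one :
    SL3p.IsPrime ∧ SL3q ≤ SL3p ∧
    ∀ (hP : (Ideal.map (Ideal.Quotient.mk SL3q) SL3p).IsPrime),
      letI := hP
      IsUnit (algebraMap (SL3Ring ⧸ SL3q)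
          (Localization.AtPrime (Ideal.map (Ideal.Quotient.mk SL3q) SL3p))
          (Ideal.Quotient.mk SL3q (X 4))) ∧
      IsLocalRing.maximalIdeal
          (Localization.AtPrime (Ideal.map (Ideal.Quotient.mk SL3q) SL3p)) =
        Ideal.span {algebraMap (SL3Ring ⧸ SL3q)
          (Localization.AtPrime (Ideal.map (Ideal.Quotient.mk SL3q) SL3p))
          (Ideal.Quotient.mk SL3q (X 1 - X 0))} := by
  obtain ⟨p_prime, q_le_p, _, hA⟩ := sl3_order_of_vanishing_one_general (k := ℂ) rfl rfl
  exact ⟨p_prime, q_le_p, fun _ => hA⟩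
end
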